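/- arXiv:2510.25171 — 3 statements merged into one kernel-verified Lean document; each statement's English description precedes it below -/
import Mathlib

section
/- Let n ≥ 2, let ψ : ℝⁿ → ℝ be a Minkowski norm, let φ : ℝⁿ → ℝ be a weak Minkowski norm, and set Ω := {x ∈ ℝⁿ : φ(x) < 1}. Let P : Ω × ℝⁿ → ℝ be the unique function satisfying P(x,y) = φ(y + P(x,y)•x) for all (x,y) ∈ Ω × ℝⁿ, and suppose (as holds automatically) that P is C^∞ on Ω × (ℝⁿ \ {0}). Define F : Ω × (ℝⁿ \ {0}) → ℝ by F(x,y) := ψ(y + P(x,y)•x)·(1 + (D_yP)(x,y)(x)), where (D_yP)(x,y) is the Fréchet derivative of z ↦ P(x,z) at z = y. Then for every y ∈ ℝⁿ \ {0} and every μ ∈ ℝ with μ•y ∈ Ω, the second Fréchet derivative of the function z ↦ F(μ•y, z)² at z = y is positive definite. -/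
/-!
Fix `x = μ • y` and write `p = P x`, which inherits positive homogeneity from `φ` because the
equation defining it has a unique solution. By homogeneity of `ψ`, near `y` we have `F x = ψ ∘ W`
with `W z = (1 + Dp_z(x)) • (z + p z • x)`. On the line `t ↦ y + t • v`, put
`m t = 1 + μ p(y + t • v)`; Euler's identity turns `W` into
`(m - t m') • (m • y + t • v) = ((m - t m') m) • y + (t (m - t m')) • v`.
Since `m - t m' = m 0 - m''(0) t² / 2 + o(t²)`, both coefficients have vanishing second derivative
at `t = 0`, so `D²W_y(v, v) = 0` and the second derivative of `F²` at `y` is that of `ψ²` at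
`W y = (m 0)² • y`, pulled back along `DW_y`. Finally `DW_y` is injective because `m 0 > 0`.
-/

open Filter Topology

section LineCalculus

variable {𝕜 E G : Type*} [NontriviallyNormedField 𝕜] [NormedAddCommGroup E] [NormedSpace 𝕜 E]
  [NormedAddCommGroup G] [NormedSpace 𝕜 G]

lemma contDiff_add_smul {n : WithTop ℕ∞} (y v : E) : ContDiff 𝕜 n fun t : 𝕜 ↦ y + t • v :=
  contDiff_const.add (contDiff_id.smul contDiff_const)

lemma tendsto_add_smul_nhds_zero (y v : E) : Tendsto (fun t : 𝕜 ↦ y + t • v) (𝓝 0) (𝓝 y) :=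
  (contDiff_add_smul (n := 0) y v).continuous.tendsto' 0 y (by simp)

lemma contDiffAt_comp_add_smul_zero {n : WithTop ℕ∞} {f : E → G} {y : E}
    (hf : ContDiffAt 𝕜 n f y) (v : E) : ContDiffAt 𝕜 n (fun t : 𝕜 ↦ f (y + t • v)) 0 :=
  ContDiffAt.comp (0 : 𝕜) (by simpa using hf) (contDiff_add_smul y v).contDiffAt

lemma iteratedDeriv_two_comp_add_smul_zero {f : E → G} {y : E} (hf : ContDiffAt 𝕜 2 f y) (v : E) :
    iteratedDeriv 2 (fun t : 𝕜 ↦ f (y + t • v)) 0 = iteratedFDeriv 𝕜 2 f y ![v, v] := by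
  have hline (t : 𝕜) : HasDerivAt (fun t : 𝕜 ↦ y + t • v) v t := by
    simpa using ((hasDerivAt_id t).smul_const v).const_add y
  have hline₁ : deriv (fun t : 𝕜 ↦ y + t • v) = fun _ ↦ v := funext fun t ↦ (hline t).deriv
  have hline₂ : iteratedDeriv 2 (fun t : 𝕜 ↦ y + t • v) 0 = 0 := by
    rw [iteratedDeriv_succ', hline₁, iteratedDeriv_one, deriv_const]
  have hchain := iteratedDeriv_vcomp_two (f := fun t : 𝕜 ↦ y + t • v) (x := 0)
    (by simpa using hf) (contDiff_add_smul y v).contDiffAt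
  have hdiag : (fun _ : Fin 2 ↦ v) = ![v, v] := by ext i; fin_cases i <;> rfl
  simpa only [Function.comp_def, hline₁, hline₂, map_zero, add_zero, zero_smul, hdiag] using hchain

lemma iteratedDeriv_two_mul {f g : 𝕜 → 𝕜} {t : 𝕜} (hf : ContDiffAt 𝕜 2 f t)
    (hg : ContDiffAt 𝕜 2 g t) :
    iteratedDeriv 2 (fun s ↦ f s * g s) t =
      f t * iteratedDeriv 2 g t + 2 * (deriv f t * deriv g t) + iteratedDeriv 2 f t * g t := by
  rw [iteratedDeriv_fun_mul hf hg]
  simp [Finset.sum_range_succ, mul_assoc]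

end LineCalculus

section TangentIntercept

variable {𝕜 E : Type*} [NontriviallyNormedField 𝕜] [NormedAddCommGroup E] [NormedSpace 𝕜 E]
  {m : 𝕜 → 𝕜}

/-- The ordinate at the origin of the tangent line to the graph of `m` at the abscissa `t`. It is
the value of the factor `1 + Dp(x)` along a line, see
`IsPosHomogeneous.funkMap_smul_add_smul`. -/
noncomputable def tangentIntercept (m : 𝕜 → 𝕜) (t : 𝕜) : 𝕜 :=
  m t - t * deriv m t

@[simp]
lemma tangentIntercept_zero (m : 𝕜 → 𝕜) : tangentIntercept m 0 = m 0 := by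
  simp [tangentIntercept]

lemma contDiffAt_two_tangentIntercept {t : 𝕜} (hm : ContDiffAt 𝕜 3 m t) :
    ContDiffAt 𝕜 2 (tangentIntercept m) t :=
  (hm.of_le (by norm_num)).sub (contDiffAt_id.mul (hm.derivWithin (by norm_num)))

lemma hasDerivAt_tangentIntercept_zero (hm : ContDiffAt 𝕜 2 m 0) :
    HasDerivAt (tangentIntercept m) 0 0 := by
  have hm₀ := (hm.differentiableAt (by simp)).hasDerivAt
  have hm₁ := ((hm.derivWithin (m := 1) (by norm_num)).differentiableAt (by simp)).hasDerivAt
  exact (hm₀.sub ((hasDerivAt_id 0).mul hm₁)).congr_deriv (by simp)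

lemma iteratedDeriv_two_tangentIntercept_zero (hm : ContDiffAt 𝕜 3 m 0) :
    iteratedDeriv 2 (tangentIntercept m) 0 = -iteratedDeriv 2 m 0 := by
  have hm₁ : ContDiffAt 𝕜 2 (deriv m) 0 := hm.derivWithin (by norm_num)
  calc iteratedDeriv 2 (tangentIntercept m) 0
      = iteratedDeriv 2 m 0 - iteratedDeriv 2 (fun t ↦ t * deriv m t) 0 :=
        iteratedDeriv_fun_sub (hm.of_le (by norm_num)) (contDiffAt_id.mul hm₁)
    _ = iteratedDeriv 2 m 0 - 2 * iteratedDeriv 2 m 0 := by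
        rw [iteratedDeriv_two_mul contDiffAt_fun_id hm₁]
        simp [iteratedDeriv_succ, iteratedDeriv_fun_id]
    _ = -iteratedDeriv 2 m 0 := by ring

lemma hasDerivAt_tangentIntercept_smul_zero (hm : ContDiffAt 𝕜 2 m 0) (y v : E) :
    HasDerivAt (fun t ↦ tangentIntercept m t • (m t • y + t • v))
      (m 0 • (v + deriv m 0 • y)) 0 := by
  have hm₀ := (hm.differentiableAt (by simp)).hasDerivAt
  have hpoint := (hm₀.smul_const y).add ((hasDerivAt_id 0).smul_const v)
  refine ((hasDerivAt_tangentIntercept_zero hm).smul hpoint).congr_deriv ?_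
  simp [add_comm v]

lemma iteratedDeriv_two_tangentIntercept_smul_zero (hm : ContDiffAt 𝕜 3 m 0) (y v : E) :
    iteratedDeriv 2 (fun t ↦ tangentIntercept m t • (m t • y + t • v)) 0 = 0 := by
  have hm₂ : ContDiffAt 𝕜 2 m 0 := hm.of_le (by norm_num)
  have hq : ContDiffAt 𝕜 2 (tangentIntercept m) 0 := contDiffAt_two_tangentIntercept hm
  have hq₁ : deriv (tangentIntercept m) 0 = 0 := (hasDerivAt_tangentIntercept_zero hm₂).deriv
  have hy : iteratedDeriv 2 (fun t ↦ tangentIntercept m t * m t) 0 = 0 := by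
    rw [iteratedDeriv_two_mul hq hm₂, hq₁, iteratedDeriv_two_tangentIntercept_zero hm,
      tangentIntercept_zero]
    ring
  have hv : iteratedDeriv 2 (fun t ↦ t * tangentIntercept m t) 0 = 0 := by
    rw [iteratedDeriv_two_mul contDiffAt_fun_id hq, hq₁]
    simp [iteratedDeriv_fun_id]
  have hcy : ContDiffAt 𝕜 2 (fun t ↦ tangentIntercept m t * m t) 0 := hq.mul hm₂
  have hcv : ContDiffAt 𝕜 2 (fun t ↦ t * tangentIntercept m t) 0 := contDiffAt_fun_id.mul hq
  calc iteratedDeriv 2 (fun t ↦ tangentIntercept m t • (m t • y + t • v)) 0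
      = iteratedDeriv 2
          (fun t ↦ (tangentIntercept m t * m t) • y + (t * tangentIntercept m t) • v) 0 := by
        congr 1
        ext t
        module
    _ = 0 := by
        rw [iteratedDeriv_fun_add (hcy.fun_smul contDiffAt_const) (hcv.fun_smul contDiffAt_const),
          iteratedDeriv_smul_const hcy, iteratedDeriv_smul_const hcv, hy, hv]
        simp

end TangentIntercept

section PosHomogeneous

variable {E : Type*} [AddCommGroup E] [Module ℝ E] {f φ : E → ℝ}

/-- Positive homogeneity of degree one of a real function on a real vector space. -/
def IsPosHomogeneous (f : E → ℝ) : Prop :=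
  ∀ α : ℝ, 0 < α → ∀ y, f (α • y) = α * f y

namespace IsPosHomogeneous

protected lemma map_zero (hf : IsPosHomogeneous f) : f 0 = 0 := by
  have h := hf 2 two_pos 0
  rw [smul_zero] at h
  linarith

lemma map_smul_of_nonneg (hf : IsPosHomogeneous f) {α : ℝ} (hα : 0 ≤ α) (y : E) :
    f (α • y) = α * f y := by
  rcases hα.eq_or_lt with rfl | hα
  · simp [hf.map_zero]
  · exact hf α hα y

lemma nonneg_of_pos (hf : IsPosHomogeneous f) (hpos : ∀ y, y ≠ 0 → 0 < f y) (y : E) :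
    0 ≤ f y := by
  rcases eq_or_ne y 0 with rfl | hy
  · exact hf.map_zero.ge
  · exact (hpos y hy).le

lemma of_unique_solution (hφ : IsPosHomogeneous φ) {x : E} {p : E → ℝ}
    (hp : ∀ y, p y = φ (y + p y • x)) (huniq : ∀ y, ∀ t : ℝ, t = φ (y + t • x) → t = p y) :
    IsPosHomogeneous p := by
  intro α hα y
  refine (huniq (α • y) (α * p y) ?_).symm
  calc α * p y = φ (α • (y + p y • x)) := by rw [hφ α hα, ← hp]
    _ = φ (α • y + (α * p y) • x) := by rw [smul_add, mul_smul]

lemma one_add_mul_pos_of_solution (hφ : IsPosHomogeneous φ) (hφ_nonneg : ∀ y, 0 ≤ φ y)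
    {y : E} {μ s : ℝ} (hμ : φ (μ • y) < 1) (hs : s = φ (y + s • μ • y)) : 0 < 1 + μ * s := by
  have hs_nonneg : 0 ≤ s := hs ▸ hφ_nonneg _
  by_contra! hle
  have hμ_neg : μ < 0 := by
    by_contra! hμ_nonneg
    linarith [mul_nonneg hμ_nonneg hs_nonneg]
  have hscale : -μ * s = -(1 + μ * s) * φ (μ • y) :=
    calc -μ * s = φ (-μ • (y + s • μ • y)) := by
          rw [hφ.map_smul_of_nonneg (neg_nonneg.2 hμ_neg.le), ← hs]
      _ = φ (-(1 + μ * s) • μ • y) := by congr 1; module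
      _ = -(1 + μ * s) * φ (μ • y) := hφ.map_smul_of_nonneg (neg_nonneg.2 hle) _
  nlinarith

end IsPosHomogeneous

end PosHomogeneous

section FunkMap

variable {E G : Type*} [NormedAddCommGroup E] [NormedSpace ℝ E] [NormedAddCommGroup G]
  [NormedSpace ℝ G] {p ψ : E → ℝ} {y : E} {μ : ℝ}

/-- The map `W` with `F x = ψ ∘ W`: the factor `1 + Dp_z(x)` of the metric
`F(x, z) = ψ(z + p z • x) (1 + Dp_z(x))` is moved inside the positively homogeneous `ψ`. -/
noncomputable def funkMap (p : E → ℝ) (x z : E) : E :=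
  (1 + fderiv ℝ p z x) • (z + p z • x)

lemma contDiffAt_funkMap {n : WithTop ℕ∞} {z : E} (hp : ContDiffAt ℝ (n + 1) p z) (x : E) :
    ContDiffAt ℝ n (funkMap p x) z :=
  (contDiffAt_const.add ((hp.fderiv_right le_rfl).clm_apply contDiffAt_const)).smul
    (contDiffAt_id.add ((hp.of_le le_self_add).smul contDiffAt_const))

namespace IsPosHomogeneous

lemma fderiv_apply_self (hp : IsPosHomogeneous p) (hdiff : DifferentiableAt ℝ p y) :
    fderiv ℝ p y y = p y := by
  have hray : HasDerivAt (fun α : ℝ ↦ α • y) y 1 := by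
    simpa using (hasDerivAt_id (1 : ℝ)).smul_const y
  have hchain : HasDerivAt (fun α : ℝ ↦ p (α • y)) (fderiv ℝ p y y) 1 :=
    HasFDerivAt.comp_hasDerivAt (1 : ℝ) (by simpa using hdiff.hasFDerivAt) hray
  have hlinear : HasDerivAt (fun α : ℝ ↦ α * p y) (p y) 1 := by
    simpa using (hasDerivAt_id (1 : ℝ)).mul_const (p y)
  refine hchain.unique (hlinear.congr_of_eventuallyEq ?_)
  filter_upwards [lt_mem_nhds one_pos] with α hα using hp α hα y

lemma funkMap_smul_self (hp : IsPosHomogeneous p) (hdiff : DifferentiableAt ℝ p y) :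
    funkMap p (μ • y) y = (1 + μ * p y) ^ 2 • y := by
  rw [funkMap, map_smul, hp.fderiv_apply_self hdiff, smul_eq_mul]
  module

lemma funkMap_smul_add_smul (hp : IsPosHomogeneous p) {v : E} {t : ℝ}
    (hdiff : DifferentiableAt ℝ p (y + t • v)) :
    funkMap p (μ • y) (y + t • v) =
      tangentIntercept (fun s ↦ 1 + μ * p (y + s • v)) t •
        ((1 + μ * p (y + t • v)) • y + t • v) := by
  have hderiv : deriv (fun s : ℝ ↦ 1 + μ * p (y + s • v)) t =
      μ * fderiv ℝ p (y + t • v) v := by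
    rw [deriv_const_add, deriv_const_mul_field, hdiff.deriv_comp_add_smul]
  have heuler : fderiv ℝ p (y + t • v) y = p (y + t • v) - t * fderiv ℝ p (y + t • v) v := by
    rw [eq_sub_iff_add_eq, ← smul_eq_mul, ← map_smul, ← map_add, hp.fderiv_apply_self hdiff]
  rw [tangentIntercept, hderiv, funkMap, map_smul, heuler, smul_eq_mul]
  module

lemma funkMap_comp_line_eventuallyEq (hp : IsPosHomogeneous p) (hsmooth : ContDiffAt ℝ 1 p y)
    (v : E) :
    (fun t : ℝ ↦ funkMap p (μ • y) (y + t • v)) =ᶠ[𝓝 0] fun t ↦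
      tangentIntercept (fun s ↦ 1 + μ * p (y + s • v)) t •
        ((1 + μ * p (y + t • v)) • y + t • v) := by
  have hdiff : ∀ᶠ z in 𝓝 y, DifferentiableAt ℝ p z :=
    (hsmooth.eventually (by simp)).mono fun z hz ↦ hz.differentiableAt (by simp)
  filter_upwards [(tendsto_add_smul_nhds_zero y v).eventually hdiff] with t ht
  exact hp.funkMap_smul_add_smul ht

lemma deriv_funkMap_comp_line_zero (hp : IsPosHomogeneous p) (hsmooth : ContDiffAt ℝ 2 p y)
    (v : E) :
    deriv (fun t : ℝ ↦ funkMap p (μ • y) (y + t • v)) 0 =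
      (1 + μ * p y) • (v + (μ * fderiv ℝ p y v) • y) := by
  have hm : ContDiffAt ℝ 2 (fun t : ℝ ↦ 1 + μ * p (y + t • v)) 0 :=
    contDiffAt_const.add (contDiffAt_const.mul (contDiffAt_comp_add_smul_zero hsmooth v))
  have hdiff : DifferentiableAt ℝ p (y + (0 : ℝ) • v) := by
    simpa using hsmooth.differentiableAt (by simp)
  have hm₁ : deriv (fun t : ℝ ↦ 1 + μ * p (y + t • v)) 0 = μ * fderiv ℝ p y v := by
    rw [deriv_const_add, deriv_const_mul_field, hdiff.deriv_comp_add_smul, zero_smul, add_zero]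
  rw [(hp.funkMap_comp_line_eventuallyEq (hsmooth.of_le (by norm_num)) v).deriv_eq,
    (hasDerivAt_tangentIntercept_smul_zero hm y v).deriv, hm₁, zero_smul, add_zero]

lemma iteratedDeriv_two_funkMap_comp_line_zero (hp : IsPosHomogeneous p)
    (hsmooth : ContDiffAt ℝ 3 p y) (v : E) :
    iteratedDeriv 2 (fun t : ℝ ↦ funkMap p (μ • y) (y + t • v)) 0 = 0 := by
  have hm : ContDiffAt ℝ 3 (fun t : ℝ ↦ 1 + μ * p (y + t • v)) 0 :=
    contDiffAt_const.add (contDiffAt_const.mul (contDiffAt_comp_add_smul_zero hsmooth v))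
  rw [(hp.funkMap_comp_line_eventuallyEq (hsmooth.of_le (by norm_num)) v).iteratedDeriv_eq,
    iteratedDeriv_two_tangentIntercept_smul_zero hm y v]

theorem iteratedFDeriv_two_comp_funkMap (hp : IsPosHomogeneous p) (hsmooth : ContDiffAt ℝ 3 p y)
    {f : E → G} (hf : ContDiffAt ℝ 2 f ((1 + μ * p y) ^ 2 • y)) (v : E) :
    iteratedFDeriv ℝ 2 (fun z ↦ f (funkMap p (μ • y) z)) y ![v, v] =
      iteratedFDeriv ℝ 2 f ((1 + μ * p y) ^ 2 • y)
        ![(1 + μ * p y) • (v + (μ * fderiv ℝ p y v) • y),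
          (1 + μ * p y) • (v + (μ * fderiv ℝ p y v) • y)] := by
  have hW : ContDiffAt ℝ 2 (funkMap p (μ • y)) y :=
    contDiffAt_funkMap (by simpa [two_add_one_eq_three] using hsmooth) _
  have hWy : funkMap p (μ • y) y = (1 + μ * p y) ^ 2 • y :=
    hp.funkMap_smul_self (hsmooth.differentiableAt (by simp))
  have hfW : ContDiffAt ℝ 2 (fun z ↦ f (funkMap p (μ • y) z)) y :=
    ContDiffAt.comp y (hWy ▸ hf) hW
  have hchain := iteratedDeriv_vcomp_two (g := f)
    (f := fun t : ℝ ↦ funkMap p (μ • y) (y + t • v)) (x := 0)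
    (by simpa [hWy] using hf) (contDiffAt_comp_add_smul_zero hW v)
  rw [← iteratedDeriv_two_comp_add_smul_zero hfW v]
  rw [hp.iteratedDeriv_two_funkMap_comp_line_zero hsmooth, map_zero, add_zero,
    hp.deriv_funkMap_comp_line_zero (hsmooth.of_le (by norm_num)), zero_smul, add_zero, hWy]
    at hchain
  refine hchain.trans (congrArg _ ?_)
  ext i; fin_cases i <;> rfl

lemma add_fderiv_smul_ne_zero (hp : IsPosHomogeneous p) (hdiff : DifferentiableAt ℝ p y)
    (hne : 1 + μ * p y ≠ 0) {v : E} (hv : v ≠ 0) : v + (μ * fderiv ℝ p y v) • y ≠ 0 := by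
  set c := μ * fderiv ℝ p y v
  intro hzero
  have hv_eq : v = -c • y := by rw [neg_smul]; exact eq_neg_of_add_eq_zero_left hzero
  have hc_eq : c = μ * (-c * p y) := by
    rw [← hp.fderiv_apply_self hdiff, ← smul_eq_mul (-c), ← map_smul, ← hv_eq]
  have hc_zero : c = 0 := by
    refine (mul_eq_zero.1 (?_ : c * (1 + μ * p y) = 0)).resolve_right hne
    linear_combination hc_eq
  exact hv (by rw [hv_eq, hc_zero, neg_zero, zero_smul])

lemma eventually_map_funkMap (hψ : IsPosHomogeneous ψ) (hp : IsPosHomogeneous p)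
    (hsmooth : ContDiffAt ℝ 1 p y) (hpos : 0 < 1 + μ * p y) :
    ∀ᶠ z in 𝓝 y, ψ (funkMap p (μ • y) z) =
      ψ (z + p z • μ • y) * (1 + fderiv ℝ p z (μ • y)) := by
  have hcont : ContinuousAt (fun z ↦ 1 + fderiv ℝ p z (μ • y)) y :=
    continuousAt_const.add ((hsmooth.continuousAt_fderiv (by simp)).clm_apply continuousAt_const)
  have hpos_y : 0 < 1 + fderiv ℝ p y (μ • y) := by
    rwa [map_smul, hp.fderiv_apply_self (hsmooth.differentiableAt (by simp)), smul_eq_mul]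
  filter_upwards [hcont.eventually (lt_mem_nhds hpos_y)] with z hz
  rw [funkMap, hψ _ hz, mul_comm]

end IsPosHomogeneous

end FunkMap

theorem stmt_14_general {E : Type*} [NormedAddCommGroup E] [NormedSpace ℝ E] (ψ φ : E → ℝ)
    (hψhom : IsPosHomogeneous ψ) (hψsmooth : ContDiffOn ℝ 2 ψ {y | y ≠ 0})
    (hψpd : ∀ y : E, y ≠ 0 → ∀ θ : E, θ ≠ 0 →
      0 < iteratedFDeriv ℝ 2 (fun z ↦ ψ z ^ 2) y ![θ, θ])
    (hφhom : IsPosHomogeneous φ) (hφnonneg : ∀ y, 0 ≤ φ y)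
    (P : E → E → ℝ) (hP : ∀ x, φ x < 1 → ∀ y, P x y = φ (y + P x y • x))
    (hPuniq : ∀ x, φ x < 1 → ∀ y, ∀ t : ℝ, t = φ (y + t • x) → t = P x y)
    (hPsmooth : ∀ x, φ x < 1 → ContDiffOn ℝ 3 (P x) {y | y ≠ 0})
    (F : E → E → ℝ)
    (hF : ∀ x, φ x < 1 → ∀ y : E, y ≠ 0 →
      F x y = ψ (y + P x y • x) * (1 + fderiv ℝ (P x) y x)) :
    ∀ y : E, y ≠ 0 → ∀ μ : ℝ, φ (μ • y) < 1 → ∀ θ : E, θ ≠ 0 →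
      0 < iteratedFDeriv ℝ 2 (fun z ↦ F (μ • y) z ^ 2) y ![θ, θ] := by
  intro y hy μ hμ θ hθ
  have hp : IsPosHomogeneous (P (μ • y)) := hφhom.of_unique_solution (hP _ hμ) (hPuniq _ hμ)
  have hpsmooth : ContDiffAt ℝ 3 (P (μ • y)) y := (hPsmooth _ hμ).contDiffAt (isOpen_ne.mem_nhds hy)
  have hpos : 0 < 1 + μ * P (μ • y) y :=
    hφhom.one_add_mul_pos_of_solution hφnonneg hμ (hP _ hμ y)
  have hWy : (1 + μ * P (μ • y) y) ^ 2 • y ≠ 0 := smul_ne_zero (pow_ne_zero 2 hpos.ne') hy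
  have hFW : (fun z ↦ F (μ • y) z ^ 2) =ᶠ[𝓝 y] fun z ↦ ψ (funkMap (P (μ • y)) (μ • y) z) ^ 2 := by
    filter_upwards [hψhom.eventually_map_funkMap hp (hpsmooth.of_le (by norm_num)) hpos,
      isOpen_ne.mem_nhds hy] with z hz hz_ne
    rw [hF _ hμ z hz_ne, hz]
  rw [(hFW.iteratedFDeriv ℝ 2).eq_of_nhds, hp.iteratedFDeriv_two_comp_funkMap hpsmooth
    (f := fun z ↦ ψ z ^ 2) ((hψsmooth.contDiffAt (isOpen_ne.mem_nhds hWy)).pow 2)]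
  exact hψpd _ hWy _ (smul_ne_zero hpos.ne'
    (hp.add_fderiv_smul_ne_zero (hpsmooth.differentiableAt (by simp)) hpos.ne' hθ))

/-- (Key lemma for `𝐊 = 0`.) Let `ψ` be a Minkowski norm, `φ` a weak
Minkowski norm, `Ω = {φ < 1}`, `P` the (smooth) unique solution of `P = φ(y + P•x)`, and
`F(x,y) = ψ(y + P(x,y)•x)·(1 + D_yP(x,y)(x))`. Then along any ray through the origin,
i.e. at points `x = μ•y ∈ Ω`, the second derivative of `F(μ•y, ·)²` at `y` is positive
definite. -/
theorem stmt_14 (n : ℕ) (hn : 2 ≤ n)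
    (ψ φ : EuclideanSpace ℝ (Fin n) → ℝ)
    -- `ψ` is a Minkowski norm
    (hψhom : ∀ α : ℝ, 0 < α → ∀ y, ψ (α • y) = α * ψ y)
    (hψpos : ∀ y : EuclideanSpace ℝ (Fin n), y ≠ 0 → 0 < ψ y)
    (hψsmooth : ContDiffOn ℝ (⊤ : ℕ∞) ψ {y | y ≠ 0})
    (hψpd : ∀ y : EuclideanSpace ℝ (Fin n), y ≠ 0 →
      ∀ θ : EuclideanSpace ℝ (Fin n), θ ≠ 0 →
        0 < iteratedFDeriv ℝ 2 (fun z => ψ z ^ 2) y ![θ, θ])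
    -- `φ` is a weak Minkowski norm
    (hφhom : ∀ α : ℝ, 0 < α → ∀ y, φ (α • y) = α * φ y)
    (hφpos : ∀ y : EuclideanSpace ℝ (Fin n), y ≠ 0 → 0 < φ y)
    (hφsmooth : ContDiffOn ℝ (⊤ : ℕ∞) φ {y | y ≠ 0})
    (hφsub : ∀ y₁ y₂, φ (y₁ + y₂) ≤ φ y₁ + φ y₂)
    (hφreg : ∀ y₁ y₂, φ (y₁ + y₂) = φ y₁ + φ y₂ →
      ∃ (v : EuclideanSpace ℝ (Fin n)) (c₁ c₂ : ℝ),
        0 ≤ c₁ ∧ 0 ≤ c₂ ∧ y₁ = c₁ • v ∧ y₂ = c₂ • v)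
    -- `P` is the unique solution of the Funk-type equation on `Ω = {φ < 1}`
    (P : EuclideanSpace ℝ (Fin n) → EuclideanSpace ℝ (Fin n) → ℝ)
    (hP : ∀ x, φ x < 1 → ∀ y, P x y = φ (y + P x y • x))
    (hPuniq : ∀ x, φ x < 1 → ∀ y, ∀ t : ℝ, t = φ (y + t • x) → t = P x y)
    (hPsmooth : ContDiffOn ℝ (⊤ : ℕ∞)
      (fun p : EuclideanSpace ℝ (Fin n) × EuclideanSpace ℝ (Fin n) => P p.1 p.2)
      ({x | φ x < 1} ×ˢ {y | y ≠ 0}))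
    -- `F` is the associated projectively flat metric
    (F : EuclideanSpace ℝ (Fin n) → EuclideanSpace ℝ (Fin n) → ℝ)
    (hF : ∀ x, φ x < 1 → ∀ y : EuclideanSpace ℝ (Fin n), y ≠ 0 →
      F x y = ψ (y + P x y • x) * (1 + fderiv ℝ (fun z => P x z) y x)) :
    ∀ y : EuclideanSpace ℝ (Fin n), y ≠ 0 → ∀ μ : ℝ, φ (μ • y) < 1 →
      ∀ θ : EuclideanSpace ℝ (Fin n), θ ≠ 0 →
        0 < iteratedFDeriv ℝ 2 (fun z => F (μ • y) z ^ 2) y ![θ, θ] := by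
  exact stmt_14_general ψ φ hψhom (hψsmooth.of_le ENat.LEInfty.out) hψpd hφhom
    (IsPosHomogeneous.nonneg_of_pos hφhom hφpos) P hP hPuniq
    (fun x hx ↦ (hPsmooth.of_le ENat.LEInfty.out).comp
      (contDiff_prodMk_right x).contDiffOn fun _ hy ↦ ⟨hx, hy⟩) F hF
end

section
/- Let ψ : ℝ² → ℝ be a Minkowski norm and φ : ℝ² → ℝ a positively 1-homogeneous function such that φ + ψ is a weak Minkowski norm and either (i) φ(y) ≥ ψ(y) for all y, with equality only at y = 0, or (ii) −ψ(y) ≤ φ(y) ≤ ψ(y) for all y, with equalities only at y = 0. Set Ω := {x ∈ ℝ² : φ(x) + ψ(x) < 1}. Suppose Φ₊, Φ₋ : Ω × ℝ² → ℝ are C^∞ on Ω × (ℝ² \ {0}) and, for each (x,y) ∈ Ω × ℝ², Φ₊(x,y) is the unique t ∈ ℝ with t = (φ + ψ)(y + t•x) and Φ₋(x,y) is the unique t ∈ ℝ with t = (φ − ψ)(y + t•x). Define F := (Φ₊ − Φ₋)/2 on Ω × (ℝ² \ {0}) and 𝒪 := {x ∈ Ω : for every y ≠ 0 the second Fréchet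 derivative of z ↦ F(x,z)² at z = y is positive definite}. Then every connected component of 𝒪 is a convex subset of ℝ². -/
/-!
Fix a direction `y ≠ 0`. If `t = f (z + t • x)` has the solution `Φ x z`, then translating the base
point along `y` gives `Φ (x + r • y) z = Φ x (z + (r * Φ (x + r • y) z) • y)`. For homogeneous `f`
this shows that, at `z = y`, translation leaves the Hessian of `Φ x` unchanged and multiplies
`(Φ₊ - Φ₋) / 2` by a positive factor. A homogeneous `G` has `G ^ 2` with positive definite Hessian
at `y` iff `G y ≠ 0` and `G y` times the Hessian of `G` is positive transversally to `y`, so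
this condition at direction `y` depends only on the line `x + ℝ y`. In the plane a connected set
containing `u` and `v` meets every line `p + ℝ y` through a point `p` of the segment `[u, v]`,
hence the condition passes from a component of `𝒪` to the segments joining its points.
-/

open Filter Topology Module Function

variable {V : Type*} [NormedAddCommGroup V] [NormedSpace ℝ V]

section SecondDerivative

variable {E : Type*} [NormedAddCommGroup E] [NormedSpace ℝ E] {F : V → E} {f : V → ℝ} {y : V}

theorem contDiffAt_of_contDiffOn_uncurry {U : Type*} [NormedAddCommGroup U] [NormedSpace ℝ U]
    {n : WithTop ℕ∞} {Φ : U → V → E} {s : Set U} {t : Set V} {x : U}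
    (hΦ : ContDiffOn ℝ n (uncurry Φ) (s ×ˢ t)) (hx : x ∈ s) (ht : t ∈ 𝓝 y) :
    ContDiffAt ℝ n (Φ x) y :=
  (hΦ.comp (contDiff_prodMk_right x).contDiffOn fun _ hz => ⟨hx, hz⟩).contDiffAt ht

theorem eventually_differentiableAt_of_contDiffAt_two (hF : ContDiffAt ℝ 2 F y) :
    ∀ᶠ z in 𝓝 y, DifferentiableAt ℝ F z :=
  (hF.eventually (by simp)).mono fun _ hz => hz.differentiableAt (by simp)

theorem hasFDerivAt_fderiv_of_contDiffAt_two (hF : ContDiffAt ℝ 2 F y) :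
    HasFDerivAt (fderiv ℝ F) (fderiv ℝ (fderiv ℝ F) y) y :=
  ((hF.fderiv_right (m := 1) (by norm_num)).differentiableAt (by simp)).hasFDerivAt

theorem hasDerivAt_comp_smul_one {F' : V →L[ℝ] E} (hF : HasFDerivAt F F' y) :
    HasDerivAt (fun α : ℝ => F (α • y)) (F' y) 1 := by
  have hray : HasDerivAt (fun α : ℝ => α • y) y 1 := by
    simpa using (hasDerivAt_id (1 : ℝ)).smul_const y
  exact hF.comp_hasDerivAt_of_eq 1 hray (one_smul ℝ y).symm

theorem iteratedFDeriv_two_sq_apply (hf : ContDiffAt ℝ 2 f y) (θ : V) :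
    iteratedFDeriv ℝ 2 (fun z => f z ^ 2) y ![θ, θ] =
      2 * fderiv ℝ f y θ ^ 2 + 2 * (f y * fderiv ℝ (fderiv ℝ f) y θ θ) := by
  have hfderiv : fderiv ℝ (fun z => f z ^ 2) =ᶠ[𝓝 y] fun z => (2 * f z) • fderiv ℝ f z := by
    filter_upwards [eventually_differentiableAt_of_contDiffAt_two hf] with z hz
    simpa using (hz.hasFDerivAt.pow 2).fderiv
  have hfderiv₂ := ((hf.differentiableAt (by simp)).hasFDerivAt.const_mul 2).fun_smul
    (hasFDerivAt_fderiv_of_contDiffAt_two hf)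
  rw [iteratedFDeriv_two_apply, hfderiv.fderiv_eq, hfderiv₂.fderiv]
  simp only [Matrix.cons_val_zero, Matrix.cons_val_one, add_apply, smul_apply,
    ContinuousLinearMap.smulRight_apply, smul_eq_mul]
  ring

theorem fderiv_fderiv_sub_div_const {g : V → ℝ} (hf : ContDiffAt ℝ 2 f y)
    (hg : ContDiffAt ℝ 2 g y) (c : ℝ) :
    fderiv ℝ (fderiv ℝ fun z => (f z - g z) / c) y =
      c⁻¹ • (fderiv ℝ (fderiv ℝ f) y - fderiv ℝ (fderiv ℝ g) y) := by
  have hfderiv : fderiv ℝ (fun z => (f z - g z) / c) =ᶠ[𝓝 y]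
      fun z => c⁻¹ • (fderiv ℝ f z - fderiv ℝ g z) := by
    filter_upwards [eventually_differentiableAt_of_contDiffAt_two hf,
      eventually_differentiableAt_of_contDiffAt_two hg] with z hfz hgz
    simpa only [div_eq_mul_inv] using
      ((hfz.hasFDerivAt.fun_sub hgz.hasFDerivAt).mul_const c⁻¹).fderiv
  rw [hfderiv.fderiv_eq]
  exact (((hasFDerivAt_fderiv_of_contDiffAt_two hf).sub
    (hasFDerivAt_fderiv_of_contDiffAt_two hg)).const_smul c⁻¹).fderiv

end SecondDerivative

/-- Positive 1-homogeneity of a real function. -/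
def PosHomogeneous (f : V → ℝ) : Prop :=
  ∀ α : ℝ, 0 < α → ∀ y, f (α • y) = α * f y

/-- The condition at `y` in the definition of a Minkowski norm `G`: the Hessian of `G ^ 2` at `y`
is positive definite. -/
def SqHessianPosDefAt (G : V → ℝ) (y : V) : Prop :=
  ∀ θ, θ ≠ 0 → 0 < iteratedFDeriv ℝ 2 (fun z => G z ^ 2) y ![θ, θ]

namespace PosHomogeneous

variable {f g : V → ℝ} {y : V}

theorem map_zero (hf : PosHomogeneous f) : f 0 = 0 := by
  have h := hf 2 two_pos 0
  rw [smul_zero] at h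
  linarith

theorem add (hf : PosHomogeneous f) (hg : PosHomogeneous g) :
    PosHomogeneous fun z => f z + g z := fun α hα z => by
  simp only [hf α hα, hg α hα, mul_add]

theorem sub (hf : PosHomogeneous f) (hg : PosHomogeneous g) :
    PosHomogeneous fun z => f z - g z := fun α hα z => by
  simp only [hf α hα, hg α hα, mul_sub]

theorem div_const (hf : PosHomogeneous f) (c : ℝ) : PosHomogeneous fun z => f z / c :=
  fun α hα z => by simp only [hf α hα, mul_div_assoc]

theorem convex_setOf_lt_one (hf : PosHomogeneous f) (hsub : ∀ u v, f (u + v) ≤ f u + f v) :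
    Convex ℝ {x | f x < 1} := by
  refine convex_iff_forall_pos.2 fun u hu v hv a b ha hb hab => ?_
  calc f (a • u + b • v) ≤ a * f u + b * f v := by
        simpa only [hf a ha, hf b hb] using hsub (a • u) (b • v)
    _ < a * 1 + b * 1 := by gcongr <;> assumption
    _ = 1 := by simpa using hab

theorem contDiffAt_smul (hf : PosHomogeneous f) {n : WithTop ℕ∞} {α : ℝ} (hα : 0 < α)
    (hfy : ContDiffAt ℝ n f y) : ContDiffAt ℝ n f (α • y) := by
  have hscale : f = fun z => α * f (α⁻¹ • z) := by
    ext z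
    rw [← hf α hα, smul_inv_smul₀ hα.ne']
  rw [hscale]
  have hfy' : ContDiffAt ℝ n f (α⁻¹ • α • y) := by rwa [inv_smul_smul₀ hα.ne']
  exact contDiffAt_const.mul (hfy'.comp (α • y) (contDiffAt_id.const_smul α⁻¹))

theorem fderiv_smul (hf : PosHomogeneous f) {α : ℝ} (hα : 0 < α) (y : V) :
    fderiv ℝ f (α • y) = fderiv ℝ f y := by
  have h : α • fderiv ℝ f (α • y) = α • fderiv ℝ f y := by
    rw [← fderiv_comp_smul, funext (hf α hα)]
    exact congrFun (fderiv_const_smul_field α) y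
  exact smul_right_injective _ hα.ne' h

theorem smul_fderiv_fderiv_smul (hf : PosHomogeneous f) {α : ℝ} (hα : 0 < α) (y : V) :
    α • fderiv ℝ (fderiv ℝ f) (α • y) = fderiv ℝ (fderiv ℝ f) y := by
  rw [← fderiv_comp_smul]
  exact congrArg (fderiv ℝ · y) (funext (hf.fderiv_smul hα))

theorem fderiv_apply_self (hf : PosHomogeneous f) (hfy : DifferentiableAt ℝ f y) :
    fderiv ℝ f y y = f y := by
  have hlinear : (fun α : ℝ => α * f y) =ᶠ[𝓝 1] fun α => f (α • y) := by
    filter_upwards [lt_mem_nhds one_pos] with α hα using (hf α hα y).symm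
  have hderiv := (hasDerivAt_comp_smul_one hfy.hasFDerivAt).congr_of_eventuallyEq hlinear
  simpa using hderiv.unique ((hasDerivAt_id (1 : ℝ)).mul_const (f y))

theorem fderiv_fderiv_apply_self_left (hf : PosHomogeneous f) (hfy : ContDiffAt ℝ 2 f y) :
    fderiv ℝ (fderiv ℝ f) y y = 0 := by
  have hconst : (fun _ : ℝ => fderiv ℝ f y) =ᶠ[𝓝 1] fun α => fderiv ℝ f (α • y) := by
    filter_upwards [lt_mem_nhds one_pos] with α hα using (hf.fderiv_smul hα y).symm
  have hderiv := (hasDerivAt_comp_smul_one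
    (hasFDerivAt_fderiv_of_contDiffAt_two hfy)).congr_of_eventuallyEq hconst
  exact hderiv.unique (hasDerivAt_const _ _)

theorem fderiv_fderiv_apply_self_right (hf : PosHomogeneous f) (hfy : ContDiffAt ℝ 2 f y)
    (θ : V) : fderiv ℝ (fderiv ℝ f) y θ y = 0 := by
  have heuler : f =ᶠ[𝓝 y] fun z => fderiv ℝ f z z := by
    filter_upwards [eventually_differentiableAt_of_contDiffAt_two hfy] with z hz
      using (hf.fderiv_apply_self hz).symm
  have hderiv := ((hasFDerivAt_fderiv_of_contDiffAt_two hfy).clm_apply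
    (hasFDerivAt_id y)).congr_of_eventuallyEq heuler
  simpa using congrArg (· θ) (hderiv.unique (hfy.differentiableAt (by simp)).hasFDerivAt)

theorem fderiv_fderiv_add_smul_self (hf : PosHomogeneous f) (hfy : ContDiffAt ℝ 2 f y)
    (θ : V) (a : ℝ) :
    fderiv ℝ (fderiv ℝ f) y (θ + a • y) (θ + a • y) = fderiv ℝ (fderiv ℝ f) y θ θ := by
  simp [hf.fderiv_fderiv_apply_self_left hfy, hf.fderiv_fderiv_apply_self_right hfy]

theorem iteratedFDeriv_two_sq_smul_self (hf : PosHomogeneous f) (hfy : ContDiffAt ℝ 2 f y)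
    (a : ℝ) :
    iteratedFDeriv ℝ 2 (fun z => f z ^ 2) y ![a • y, a • y] = 2 * (a * f y) ^ 2 := by
  rw [iteratedFDeriv_two_sq_apply hfy]
  simp [hf.fderiv_apply_self (hfy.differentiableAt (by simp)),
    hf.fderiv_fderiv_apply_self_left hfy]

theorem sqHessianPosDefAt_iff (hf : PosHomogeneous f) (hfy : ContDiffAt ℝ 2 f y) (hy : y ≠ 0) :
    SqHessianPosDefAt f y ↔
      f y ≠ 0 ∧ ∀ θ ∉ Submodule.span ℝ {y}, 0 < f y * fderiv ℝ (fderiv ℝ f) y θ θ := by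
  constructor
  · intro hpos
    have hne : f y ≠ 0 := by
      intro hzero
      have h := hpos ((1 : ℝ) • y) (by simpa using hy)
      rw [hf.iteratedFDeriv_two_sq_smul_self hfy] at h
      simp [hzero] at h
    refine ⟨hne, fun θ hθ => ?_⟩
    -- Move `θ` along `y` into the kernel of the differential; this does not change the Hessian.
    let a := -fderiv ℝ f y θ / f y
    have htangent : fderiv ℝ f y (θ + a • y) = 0 := by
      rw [map_add, map_smul, hf.fderiv_apply_self (hfy.differentiableAt (by simp)), smul_eq_mul,
        div_mul_cancel₀ _ hne, add_neg_cancel]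
    have hθa : θ + a • y ≠ 0 := fun h =>
      hθ (Submodule.mem_span_singleton.2 ⟨-a, by rw [neg_smul, eq_neg_of_add_eq_zero_left h]⟩)
    have h := hpos _ hθa
    rw [iteratedFDeriv_two_sq_apply hfy, htangent, hf.fderiv_fderiv_add_smul_self hfy] at h
    linarith
  · rintro ⟨hne, hpos⟩ θ hθ
    by_cases hspan : θ ∈ Submodule.span ℝ {y}
    · obtain ⟨a, rfl⟩ := Submodule.mem_span_singleton.1 hspan
      have ha : a ≠ 0 := left_ne_zero_of_smul hθ
      rw [hf.iteratedFDeriv_two_sq_smul_self hfy]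
      positivity
    · have := hpos θ hspan
      rw [iteratedFDeriv_two_sq_apply hfy]
      positivity

theorem sqHessianPosDefAt_congr (hf : PosHomogeneous f) (hg : PosHomogeneous g)
    (hfy : ContDiffAt ℝ 2 f y) (hgy : ContDiffAt ℝ 2 g y) (hy : y ≠ 0) {c : ℝ} (hc : 0 < c)
    (hval : g y = c * f y)
    (hhess : ∀ θ, fderiv ℝ (fderiv ℝ g) y θ θ = fderiv ℝ (fderiv ℝ f) y θ θ) :
    SqHessianPosDefAt g y ↔ SqHessianPosDefAt f y := by
  simp only [hf.sqHessianPosDefAt_iff hfy hy, hg.sqHessianPosDefAt_iff hgy hy, hval, hhess,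
    mul_assoc, mul_pos_iff_of_pos_left hc, mul_ne_zero_iff, ne_eq, hc.ne', not_false_eq_true,
    true_and]

end PosHomogeneous

section Translation

variable {p q : V → ℝ} {y v : V} {r : ℝ}

theorem hasFDerivAt_add_mul_smul (hq : DifferentiableAt ℝ q y) (r : ℝ) (v : V) :
    HasFDerivAt (fun z => z + (r * q z) • v) (.id ℝ V + (r • fderiv ℝ q y).smulRight v) y :=
  (hasFDerivAt_id y).add ((hq.hasFDerivAt.const_mul r).smul_const v)

theorem fderiv_apply_of_eq_comp_add_smul (hpq : ∀ z, q z = p (z + (r * q z) • v))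
    (hq : DifferentiableAt ℝ q y) (hp : DifferentiableAt ℝ p (y + (r * q y) • v)) (θ : V) :
    fderiv ℝ q y θ = fderiv ℝ p (y + (r * q y) • v) (θ + (r * fderiv ℝ q y θ) • v) := by
  have hcomp : HasFDerivAt q _ y :=
    (hp.hasFDerivAt.comp y (hasFDerivAt_add_mul_smul hq r v)).congr_of_eventuallyEq
      (.of_forall hpq)
  simpa using congrArg (· θ) hcomp.fderiv

theorem fderiv_fderiv_apply_of_eq_comp_add_smul (hpq : ∀ z, q z = p (z + (r * q z) • v))
    (hq : ContDiffAt ℝ 2 q y) (hp : ContDiffAt ℝ 2 p (y + (r * q y) • v)) (θ : V) :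
    fderiv ℝ (fderiv ℝ q) y θ θ =
      fderiv ℝ (fderiv ℝ p) (y + (r * q y) • v) (θ + (r * fderiv ℝ q y θ) • v)
        (θ + (r * fderiv ℝ q y θ) • v) +
      r * fderiv ℝ (fderiv ℝ q) y θ θ * fderiv ℝ p (y + (r * q y) • v) v := by
  have htranslate := hasFDerivAt_add_mul_smul (hq.differentiableAt (by simp)) r v
  have hfderiv : (fun z => fderiv ℝ q z θ) =ᶠ[𝓝 y]
      fun z => fderiv ℝ p (z + (r * q z) • v) (θ + (r * fderiv ℝ q z θ) • v) := by
    filter_upwards [eventually_differentiableAt_of_contDiffAt_two hq,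
      htranslate.continuousAt.eventually (eventually_differentiableAt_of_contDiffAt_two hp)]
      with z hqz hpz using fderiv_apply_of_eq_comp_add_smul hpq hqz hpz θ
  have hleft := (hasFDerivAt_fderiv_of_contDiffAt_two hq).clm_apply (hasFDerivAt_const θ y)
  have hright := ((hasFDerivAt_fderiv_of_contDiffAt_two hp).comp y htranslate).clm_apply
    (((hleft.const_mul r).smul_const v).const_add θ)
  simpa [mul_add, add_comm] using
    congrArg (· θ) (hleft.unique (hright.congr_of_eventuallyEq hfderiv))

theorem PosHomogeneous.apply_self_of_eq_comp_add_smul (hp : PosHomogeneous p)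
    (hpq : q y = p (y + (r * q y) • y)) (hpos : 0 < 1 + r * q y) :
    q y = (1 + r * q y) * p y := by
  rw [← hp _ hpos, add_smul, one_smul, ← hpq]

theorem PosHomogeneous.fderiv_fderiv_eq_of_eq_comp_add_smul (hhom : PosHomogeneous p)
    (hpq : ∀ z, q z = p (z + (r * q z) • y)) (hpos : 0 < 1 + r * q y)
    (hp : ContDiffAt ℝ 2 p y) (hq : ContDiffAt ℝ 2 q y) (θ : V) :
    fderiv ℝ (fderiv ℝ q) y θ θ = fderiv ℝ (fderiv ℝ p) y θ θ := by
  have hqy := hhom.apply_self_of_eq_comp_add_smul (hpq y) hpos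
  have hpoint : y + (r * q y) • y = (1 + r * q y) • y := by rw [add_smul, one_smul]
  have hchain := fderiv_fderiv_apply_of_eq_comp_add_smul hpq hq
    (hpoint ▸ hhom.contDiffAt_smul hpos hp) θ
  rw [hpoint, hhom.fderiv_smul hpos, hhom.fderiv_apply_self (hp.differentiableAt (by simp))]
    at hchain
  have hscale := congrArg (fun B => B (θ + (r * fderiv ℝ q y θ) • y)
    (θ + (r * fderiv ℝ q y θ) • y)) (hhom.smul_fderiv_fderiv_smul hpos y)
  simp only [smul_apply, smul_eq_mul] at hscale
  rw [hhom.fderiv_fderiv_add_smul_self hp] at hscale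
  linear_combination (1 + r * q y) * hchain + hscale - r * fderiv ℝ (fderiv ℝ q) y θ θ * hqy

end Translation

/-- `P y` is the unique solution `t` of `t = f (y + t • x)`, for every `y`. When `f` is a norm
with open unit ball `Ω ∋ x`, this `P` is the Funk metric of `Ω` at `x`. -/
structure IsFunkAt (f : V → ℝ) (x : V) (P : V → ℝ) : Prop where
  eq : ∀ y, P y = f (y + P y • x)
  unique : ∀ y t, t = f (y + t • x) → t = P y

namespace IsFunkAt

variable {f P Q : V → ℝ} {x y : V} {r : ℝ}

theorem posHomogeneous (hf : PosHomogeneous f) (hP : IsFunkAt f x P) : PosHomogeneous P :=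
  fun α hα y => (hP.unique (α • y) (α * P y)
    (by rw [mul_smul, ← smul_add, hf α hα, ← hP.eq])).symm

theorem eq_comp_add_smul (hP : IsFunkAt f x P) (hQ : IsFunkAt f (x + r • y) Q) (z : V) :
    Q z = P (z + (r * Q z) • y) := by
  refine hP.unique _ _ ((hQ.eq z).trans (congrArg f ?_))
  module

theorem one_add_mul_ne_zero (hf : PosHomogeneous f) (hP : IsFunkAt f x P)
    (hQ : IsFunkAt f (x + r • y) Q) : 1 + r * Q y ≠ 0 := by
  intro hzero
  have hpoint : y + (r * Q y) • y = 0 := by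
    simpa [add_smul] using congrArg (· • y) hzero
  have hQy : Q y = 0 := by
    rw [hP.eq_comp_add_smul hQ, hpoint, (hP.posHomogeneous hf).map_zero]
  simp [hQy] at hzero

theorem one_add_mul_pos {Ω : Set V} {Φ : V → V → ℝ} (hf : PosHomogeneous f) (hΩ : Convex ℝ Ω)
    (hΦ : ∀ x ∈ Ω, IsFunkAt f x (Φ x)) (hcont : ContinuousOn (fun x => Φ x y) Ω)
    (hx : x ∈ Ω) (hxr : x + r • y ∈ Ω) : 0 < 1 + r * Φ (x + r • y) y := by
  by_contra! hneg
  have hmem : ∀ s ∈ Set.Icc (0 : ℝ) 1, x + (s * r) • y ∈ Ω := fun s hs => by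
    simpa only [smul_smul] using hΩ.add_smul_mem hx hxr hs
  have hcontSegment :
      ContinuousOn (fun s : ℝ => 1 + (s * r) * Φ (x + (s * r) • y) y) (Set.Icc 0 1) := by
    have hΦcont := hcont.comp (f := fun s : ℝ => x + (s * r) • y) (by fun_prop) hmem
    exact continuousOn_const.add ((by fun_prop : Continuous (· * r)).continuousOn.mul hΦcont)
  obtain ⟨s, hs, hzero⟩ := intermediate_value_Icc' zero_le_one hcontSegment
    ⟨by simpa using hneg, by simp⟩
  exact (hΦ x hx).one_add_mul_ne_zero hf (hΦ _ (hmem s hs)) hzero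

end IsFunkAt

theorem exists_ker_eq_span_singleton (hV : finrank ℝ V = 2) {y : V} (hy : y ≠ 0) :
    ∃ ℓ : V →ₗ[ℝ] ℝ, ℓ.ker = Submodule.span ℝ {y} := by
  have : FiniteDimensional ℝ V := .of_finrank_eq_succ hV
  have hspan : finrank ℝ (Submodule.span ℝ {y}) = 1 := finrank_span_singleton hy
  obtain ⟨ℓ, hℓ, hle⟩ := (Submodule.span ℝ {y}).exists_le_ker_of_lt_top
    (Submodule.lt_top_of_finrank_lt_finrank (by omega))
  have hker := Module.Dual.finrank_ker_add_one_of_ne_zero hℓ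
  exact ⟨ℓ, (Submodule.eq_of_le_of_finrank_eq hle (by omega)).symm⟩

theorem exists_add_smul_eq_of_isPreconnected (hV : finrank ℝ V = 2) {C : Set V}
    (hC : IsPreconnected C) {u v p y : V} (hu : u ∈ C) (hv : v ∈ C) (hp : p ∈ segment ℝ u v)
    (hy : y ≠ 0) : ∃ c ∈ C, ∃ t : ℝ, c + t • y = p := by
  have : FiniteDimensional ℝ V := .of_finrank_eq_succ hV
  obtain ⟨ℓ, hker⟩ := exists_ker_eq_span_singleton hV hy
  have hℓp : ℓ p ∈ Set.uIcc (ℓ u) (ℓ v) := by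
    rw [← segment_eq_uIcc]
    exact image_segment ℝ ℓ.toAffineMap u v ▸ Set.mem_image_of_mem ℓ hp
  have himage := (hC.image ℓ ℓ.continuous_of_finiteDimensional.continuousOn).ordConnected
  obtain ⟨c, hc, hcp⟩ :=
    himage.uIcc_subset (Set.mem_image_of_mem ℓ hu) (Set.mem_image_of_mem ℓ hv) hℓp
  have hdiff : p - c ∈ Submodule.span ℝ {y} := by
    rw [← hker, LinearMap.mem_ker, map_sub, hcp, sub_self]
  obtain ⟨t, ht⟩ := Submodule.mem_span_singleton.1 hdiff
  exact ⟨c, hc, t, by rw [ht, add_sub_cancel]⟩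

theorem convex_connectedComponentIn_of_translation_invariant (hV : finrank ℝ V = 2) {Ω : Set V}
    (hΩ : Convex ℝ Ω) {p : V → V → Prop}
    (hp : ∀ x ∈ Ω, ∀ y, y ≠ 0 → ∀ t : ℝ, x + t • y ∈ Ω → p x y → p (x + t • y) y) (x : V) :
    Convex ℝ (connectedComponentIn {x | x ∈ Ω ∧ ∀ y, y ≠ 0 → p x y} x) := by
  set O := {x | x ∈ Ω ∧ ∀ y, y ≠ 0 → p x y}
  refine convex_iff_segment_subset.2 fun u hu v hv => ?_
  have hsub : connectedComponentIn O x ⊆ O := connectedComponentIn_subset O x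
  have hsegment : segment ℝ u v ⊆ O := fun w hw => by
    have hwΩ : w ∈ Ω := hΩ.segment_subset (hsub hu).1 (hsub hv).1 hw
    refine ⟨hwΩ, fun y hy => ?_⟩
    obtain ⟨c, hc, t, rfl⟩ :=
      exists_add_smul_eq_of_isPreconnected hV isPreconnected_connectedComponentIn hu hv hw hy
    exact hp c (hsub hc).1 y hy t hwΩ ((hsub hc).2 y hy)
  rw [connectedComponentIn_eq hu]
  exact (convex_segment u v).isPreconnected.subset_connectedComponentIn
    (left_mem_segment ℝ u v) hsegment

section FunkDifference

variable {f g : V → ℝ} {Ω : Set V} {Φp Φm : V → V → ℝ}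

theorem SqHessianPosDefAt.translate_funk_sub_div_two (hf : PosHomogeneous f)
    (hg : PosHomogeneous g) (hΩ : Convex ℝ Ω)
    (hΦp : ∀ x ∈ Ω, IsFunkAt f x (Φp x)) (hΦm : ∀ x ∈ Ω, IsFunkAt g x (Φm x))
    (hΦpsmooth : ContDiffOn ℝ 2 (uncurry Φp) (Ω ×ˢ {y | y ≠ 0}))
    (hΦmsmooth : ContDiffOn ℝ 2 (uncurry Φm) (Ω ×ˢ {y | y ≠ 0}))
    {x y : V} {t : ℝ} (hx : x ∈ Ω) (hxt : x + t • y ∈ Ω) (hy : y ≠ 0)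
    (hpos : SqHessianPosDefAt (fun z => (Φp x z - Φm x z) / 2) y) :
    SqHessianPosDefAt (fun z => (Φp (x + t • y) z - Φm (x + t • y) z) / 2) y := by
  have hhom : ∀ w ∈ Ω, PosHomogeneous fun z => (Φp w z - Φm w z) / 2 := fun w hw =>
    (((hΦp w hw).posHomogeneous hf).sub ((hΦm w hw).posHomogeneous hg)).div_const 2
  have hp : ∀ w ∈ Ω, ContDiffAt ℝ 2 (Φp w) y := fun w hw =>
    contDiffAt_of_contDiffOn_uncurry hΦpsmooth hw (isOpen_ne.mem_nhds hy)
  have hm : ∀ w ∈ Ω, ContDiffAt ℝ 2 (Φm w) y := fun w hw =>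
    contDiffAt_of_contDiffOn_uncurry hΦmsmooth hw (isOpen_ne.mem_nhds hy)
  have hppos := IsFunkAt.one_add_mul_pos hf hΩ hΦp
    (hΦpsmooth.continuousOn.uncurry_right y hy) hx hxt
  have hmpos := IsFunkAt.one_add_mul_pos hg hΩ hΦm
    (hΦmsmooth.continuousOn.uncurry_right y hy) hx hxt
  have hprel := (hΦp x hx).eq_comp_add_smul (hΦp _ hxt)
  have hmrel := (hΦm x hx).eq_comp_add_smul (hΦm _ hxt)
  have hphom := (hΦp x hx).posHomogeneous hf
  have hmhom := (hΦm x hx).posHomogeneous hg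
  have hpval := hphom.apply_self_of_eq_comp_add_smul (hprel y) hppos
  have hmval := hmhom.apply_self_of_eq_comp_add_smul (hmrel y) hmpos
  refine (PosHomogeneous.sqHessianPosDefAt_congr (hhom x hx) (hhom _ hxt)
    (((hp x hx).sub (hm x hx)).div_const 2) (((hp _ hxt).sub (hm _ hxt)).div_const 2) hy
    (mul_pos hppos hmpos) ?_ fun θ => ?_).2 hpos
  · linear_combination (1 / 2) * (1 + t * Φm (x + t • y) y) * hpval -
      (1 / 2) * (1 + t * Φp (x + t • y) y) * hmval
  · rw [fderiv_fderiv_sub_div_const (hp _ hxt) (hm _ hxt),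
      fderiv_fderiv_sub_div_const (hp x hx) (hm x hx)]
    simp only [smul_apply, sub_apply,
      hphom.fderiv_fderiv_eq_of_eq_comp_add_smul hprel hppos (hp x hx) (hp _ hxt),
      hmhom.fderiv_fderiv_eq_of_eq_comp_add_smul hmrel hmpos (hm x hx) (hm _ hxt)]

theorem stmt_17_general (hV : finrank ℝ V = 2) (hf : PosHomogeneous f) (hg : PosHomogeneous g)
    (hΩ : Convex ℝ Ω)
    (hΦp : ∀ x ∈ Ω, IsFunkAt f x (Φp x)) (hΦm : ∀ x ∈ Ω, IsFunkAt g x (Φm x))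
    (hΦpsmooth : ContDiffOn ℝ 2 (uncurry Φp) (Ω ×ˢ {y | y ≠ 0}))
    (hΦmsmooth : ContDiffOn ℝ 2 (uncurry Φm) (Ω ×ˢ {y | y ≠ 0})) (x : V) :
    Convex ℝ (connectedComponentIn
      {x | x ∈ Ω ∧ ∀ y, y ≠ 0 → SqHessianPosDefAt (fun z => (Φp x z - Φm x z) / 2) y} x) :=
  convex_connectedComponentIn_of_translation_invariant hV hΩ
    (fun _ hx _ hy _ hxt hpos => hpos.translate_funk_sub_div_two hf hg hΩ hΦp hΦm
      hΦpsmooth hΦmsmooth hx hxt hy) x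

end FunkDifference

/-- In dimension 2, for the metric `F = (Φ₊ − Φ₋)/2` of constant flag
curvature `−1` built from a Minkowski norm `ψ` and a positively 1-homogeneous `φ` with
`φ + ψ` a weak Minkowski norm and either `ψ < φ` or `−ψ < φ < ψ` away from `0`, every
connected component of the set `𝒪` of points `x` at which `F(x,·)` is a Minkowski norm
is convex. -/
theorem stmt_17
    (ψ φ : EuclideanSpace ℝ (Fin 2) → ℝ)
    -- `ψ` is a Minkowski norm
    (hψhom : ∀ α : ℝ, 0 < α → ∀ y, ψ (α • y) = α * ψ y)
    (hψpos : ∀ y : EuclideanSpace ℝ (Fin 2), y ≠ 0 → 0 < ψ y)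
    (hψsmooth : ContDiffOn ℝ (⊤ : ℕ∞) ψ {y | y ≠ 0})
    (hψpd : ∀ y : EuclideanSpace ℝ (Fin 2), y ≠ 0 →
      ∀ θ : EuclideanSpace ℝ (Fin 2), θ ≠ 0 →
        0 < iteratedFDeriv ℝ 2 (fun z => ψ z ^ 2) y ![θ, θ])
    -- `φ` is positively 1-homogeneous
    (hφhom : ∀ α : ℝ, 0 < α → ∀ y, φ (α • y) = α * φ y)
    -- `φ + ψ` is a weak Minkowski norm
    (hsumpos : ∀ y : EuclideanSpace ℝ (Fin 2), y ≠ 0 → 0 < φ y + ψ y)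
    (hsumsmooth : ContDiffOn ℝ (⊤ : ℕ∞) (fun y => φ y + ψ y) {y | y ≠ 0})
    (hsumsub : ∀ y₁ y₂, φ (y₁ + y₂) + ψ (y₁ + y₂) ≤ (φ y₁ + ψ y₁) + (φ y₂ + ψ y₂))
    (hsumreg : ∀ y₁ y₂, φ (y₁ + y₂) + ψ (y₁ + y₂) = (φ y₁ + ψ y₁) + (φ y₂ + ψ y₂) →
      ∃ (v : EuclideanSpace ℝ (Fin 2)) (c₁ c₂ : ℝ),
        0 ≤ c₁ ∧ 0 ≤ c₂ ∧ y₁ = c₁ • v ∧ y₂ = c₂ • v)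
    -- case (i) or case (ii)
    (hcase : (∀ y : EuclideanSpace ℝ (Fin 2), y ≠ 0 → ψ y < φ y) ∨
      (∀ y : EuclideanSpace ℝ (Fin 2), y ≠ 0 → -ψ y < φ y ∧ φ y < ψ y))
    -- `Φ₊`, `Φ₋` are the unique (smooth) solutions on `Ω = {φ + ψ < 1}`
    (Φp Φm : EuclideanSpace ℝ (Fin 2) → EuclideanSpace ℝ (Fin 2) → ℝ)
    (hΦp : ∀ x, φ x + ψ x < 1 → ∀ y,
      Φp x y = φ (y + Φp x y • x) + ψ (y + Φp x y • x))
    (hΦpuniq : ∀ x, φ x + ψ x < 1 → ∀ y, ∀ t : ℝ,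
      t = φ (y + t • x) + ψ (y + t • x) → t = Φp x y)
    (hΦm : ∀ x, φ x + ψ x < 1 → ∀ y,
      Φm x y = φ (y + Φm x y • x) - ψ (y + Φm x y • x))
    (hΦmuniq : ∀ x, φ x + ψ x < 1 → ∀ y, ∀ t : ℝ,
      t = φ (y + t • x) - ψ (y + t • x) → t = Φm x y)
    (hΦpsmooth : ContDiffOn ℝ (⊤ : ℕ∞)
      (fun p : EuclideanSpace ℝ (Fin 2) × EuclideanSpace ℝ (Fin 2) => Φp p.1 p.2)
      ({x | φ x + ψ x < 1} ×ˢ {y | y ≠ 0}))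
    (hΦmsmooth : ContDiffOn ℝ (⊤ : ℕ∞)
      (fun p : EuclideanSpace ℝ (Fin 2) × EuclideanSpace ℝ (Fin 2) => Φm p.1 p.2)
      ({x | φ x + ψ x < 1} ×ˢ {y | y ≠ 0}))
    -- `O` is the set on which `F(x,·) = ((Φ₊ − Φ₋)/2)(x,·)` is a Minkowski norm
    (O : Set (EuclideanSpace ℝ (Fin 2)))
    (hO : O = {x | φ x + ψ x < 1 ∧ ∀ y : EuclideanSpace ℝ (Fin 2), y ≠ 0 →
      ∀ θ : EuclideanSpace ℝ (Fin 2), θ ≠ 0 →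
        0 < iteratedFDeriv ℝ 2 (fun z => ((Φp x z - Φm x z) / 2) ^ 2) y ![θ, θ]}) :
    ∀ x ∈ O, Convex ℝ (connectedComponentIn O x) := by
  have hsum : PosHomogeneous fun z => φ z + ψ z := .add hφhom hψhom
  have hdiff : PosHomogeneous fun z => φ z - ψ z := .sub hφhom hψhom
  have htwo : (2 : WithTop ℕ∞) ≤ (⊤ : ℕ∞) := WithTop.coe_le_coe.2 le_top
  rw [hO]
  exact fun x _ => stmt_17_general (by simp) hsum hdiff (hsum.convex_setOf_lt_one hsumsub)
    (fun x hx => ⟨hΦp x hx, hΦpuniq x hx⟩) (fun x hx => ⟨hΦm x hx, hΦmuniq x hx⟩)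
    (hΦpsmooth.of_le htwo) (hΦmsmooth.of_le htwo) x
end

section
/- Let n ≥ 1 and define p : ℝⁿ → ℝⁿ × ℝ by p(x) := (1 + ‖x‖²)^{−1/2} • (x, 1), where ℝⁿ × ℝ carries the Euclidean norm. Let w ∈ ℝⁿ with ‖w‖ = 1, let V ∈ ℝⁿ with ⟨w, V⟩ = 0, and let v < 0. Then for x ∈ ℝⁿ and y ∈ ℝⁿ \ {0} the following are equivalent: (i) as h → +∞, p(x + h•y) tends to (w, 0) and h² • (d/dh)[p(x + h•y)] tends to (V, v); (ii) there exists λ ∈ ℝ with y = (−1/v)•w and x = (1/v)•(V − λ•w). Consequently, the set of all pairs (x,y) satisfying (i) is exactly the one-parameter family {((1/v)•(V − λ•w), (−1/v)•w) : λ ∈ ℝ}; in particular all such pairs determine the same straight line in ℝⁿ. -/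
open scoped RealInnerProductSpace

noncomputable section

/-- The diffeomorphism `p(x) = (x, 1)/√(1 + ‖x‖²)` from `ℝⁿ` onto the open upper
hemisphere of the unit sphere of `ℝⁿ × ℝ ≅ ℝ^{n+1}`. -/
def sphereMap (n : ℕ) (x : EuclideanSpace ℝ (Fin n)) : EuclideanSpace ℝ (Fin n) × ℝ :=
  (Real.sqrt (1 + ‖x‖ ^ 2))⁻¹ • ((x, 1) : EuclideanSpace ℝ (Fin n) × ℝ)

/-- Condition (i): as `h → +∞`, `p(x + h•y)` tends to `(w, 0)` and
`h² • (d/dh)[p(x + h•y)]` tends to `(V, v)`. -/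
def TendsCond (n : ℕ) (w V : EuclideanSpace ℝ (Fin n)) (v : ℝ)
    (x y : EuclideanSpace ℝ (Fin n)) : Prop :=
  Filter.Tendsto (fun h : ℝ => sphereMap n (x + h • y)) Filter.atTop
      (nhds ((w, 0) : EuclideanSpace ℝ (Fin n) × ℝ)) ∧
  Filter.Tendsto (fun h : ℝ => h ^ 2 • deriv (fun s : ℝ => sphereMap n (x + s • y)) h)
      Filter.atTop (nhds ((V, v) : EuclideanSpace ℝ (Fin n) × ℝ))

/-!
The curve `h ↦ p (x + h • y)` is the radial projection of the line `(x, 1) + h • (y, 0)` to the unit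
sphere. Radial projection ignores positive scalars, so with `t = h⁻¹` the same curve is the
projection of `(y, 0) + t • (x, 1)`, which is smooth at `t = 0` because `y ≠ 0`. As
`h² d/dh = -d/dt`, the two limits are the value and minus the derivative of this curve at `t = 0`,
namely `(y/‖y‖, 0)` and `-‖y‖⁻¹ • (u, 1)`, where `u` is the component of `x` orthogonal to `y`.
They determine `y`, and they determine `x` up to a multiple of `y`.
-/

open Filter Topology NormedSpace WithLp

section Normed

variable {F : Type*} [NormedAddCommGroup F] [NormedSpace ℝ F]

theorem tendsto_sq_smul_deriv_comp_inv_atTop {g : ℝ → F} (hg : ContDiffAt ℝ 1 g 0) :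
    Tendsto (fun h : ℝ => h ^ 2 • deriv (fun s => g s⁻¹) h) atTop (𝓝 (-deriv g 0)) := by
  have deriv_tendsto : Tendsto (fun h : ℝ => -deriv g h⁻¹) atTop (𝓝 (-deriv g 0)) :=
    ((hg.derivWithin (m := 0) (by simp)).continuousAt.tendsto.comp tendsto_inv_atTop_zero).neg
  have differentiable_near : ∀ᶠ t in 𝓝 (0 : ℝ), DifferentiableAt ℝ g t :=
    (hg.eventually (by simp)).mono fun t ht => ht.differentiableAt one_ne_zero
  refine deriv_tendsto.congr' ?_
  filter_upwards [tendsto_inv_atTop_zero.eventually differentiable_near, eventually_ne_atTop 0]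
    with h hdiff hne
  have chain_rule : deriv (fun s => g s⁻¹) h = -(h ^ 2)⁻¹ • deriv g h⁻¹ :=
    (hdiff.hasDerivAt.scomp h (hasDerivAt_inv hne)).deriv
  rw [chain_rule, smul_smul, mul_neg, mul_inv_cancel₀ (pow_ne_zero 2 hne), neg_one_smul]

theorem normalize_add_smul_eq_normalize_add_inv_smul (a b : F) {h : ℝ} (hh : 0 < h) :
    normalize (a + h • b) = normalize (b + h⁻¹ • a) := by
  rw [← normalize_smul_of_pos hh (b + h⁻¹ • a), smul_add, smul_inv_smul₀ hh.ne', add_comm]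

theorem normalize_eq_and_neg_inv_norm_eq_iff {w y : F} {v : ℝ} (hw : ‖w‖ = 1) (hv : v < 0) :
    normalize y = w ∧ -‖y‖⁻¹ = v ↔ y = (-1 / v) • w := by
  constructor
  · rintro ⟨rfl, rfl⟩
    rw [neg_div_neg_eq, one_div, inv_inv, norm_smul_normalize]
  · rintro rfl
    have hpos : 0 < -1 / v := div_pos_of_neg_of_neg neg_one_lt_zero hv
    refine ⟨?_, ?_⟩
    · rw [normalize_smul_of_pos hpos, normalize_eq_self_of_norm_eq_one hw]
    · rw [norm_smul_of_nonneg hpos.le, hw, mul_one, inv_div, div_neg, div_one, neg_neg]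

end Normed

section InnerProduct

variable {F : Type*} [NormedAddCommGroup F] [InnerProductSpace ℝ F]

theorem contDiffAt_normalize {b : F} (hb : b ≠ 0) {k : WithTop ℕ∞} :
    ContDiffAt ℝ k (normalize : F → F) b :=
  ((contDiffAt_norm ℝ hb).inv (norm_ne_zero_iff.2 hb)).smul contDiffAt_id

theorem hasDerivAt_norm_comp {f : ℝ → F} {f' : F} {t : ℝ} (hf : HasDerivAt f f' t)
    (h0 : f t ≠ 0) : HasDerivAt (fun s => ‖f s‖) ⟪normalize (f t), f'⟫ t := by
  have hsqrt := hf.norm_sq.sqrt (pow_ne_zero 2 (norm_ne_zero_iff.2 h0))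
  simp only [Real.sqrt_sq (norm_nonneg _)] at hsqrt
  refine hsqrt.congr_deriv ?_
  rw [NormedSpace.normalize, real_inner_smul_left]
  field_simp

theorem hasDerivAt_normalize_comp {f : ℝ → F} {f' : F} {t : ℝ} (hf : HasDerivAt f f' t)
    (h0 : f t ≠ 0) :
    HasDerivAt (fun s => normalize (f s))
      (‖f t‖⁻¹ • (f' - ⟪normalize (f t), f'⟫ • normalize (f t))) t := by
  refine (((hasDerivAt_norm_comp hf h0).fun_inv (norm_ne_zero_iff.2 h0)).fun_smul hf).congr_deriv ?_
  simp only [NormedSpace.normalize]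
  module

theorem tendsto_normalize_add_smul_atTop (a : F) {b : F} (hb : b ≠ 0) :
    Tendsto (fun h : ℝ => normalize (a + h • b)) atTop (𝓝 (normalize b)) := by
  have line_tendsto : Tendsto (fun h : ℝ => b + h⁻¹ • a) atTop (𝓝 b) := by
    simpa using (tendsto_inv_atTop_zero (𝕜 := ℝ)).smul_const a |>.const_add b
  refine ((contDiffAt_normalize hb (k := 0)).continuousAt.tendsto.comp line_tendsto).congr' ?_
  filter_upwards [eventually_gt_atTop 0] with h hh
  exact (normalize_add_smul_eq_normalize_add_inv_smul a b hh).symm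

theorem tendsto_sq_smul_deriv_normalize_add_smul_atTop (a : F) {b : F} (hb : b ≠ 0) :
    Tendsto (fun h : ℝ => h ^ 2 • deriv (fun s : ℝ => normalize (a + s • b)) h) atTop
      (𝓝 (-(‖b‖⁻¹ • (a - ⟪normalize b, a⟫ • normalize b)))) := by
  have smooth : ContDiffAt ℝ 1 (fun t : ℝ => normalize (b + t • a)) 0 :=
    ContDiffAt.comp 0 (contDiffAt_normalize (by simpa using hb)) (by fun_prop)
  have line_deriv : HasDerivAt (fun t : ℝ => b + t • a) a 0 := by
    simpa using ((hasDerivAt_id (0 : ℝ)).smul_const a).const_add b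
  have deriv_zero : deriv (fun t : ℝ => normalize (b + t • a)) 0 =
      ‖b‖⁻¹ • (a - ⟪normalize b, a⟫ • normalize b) := by
    simpa using (hasDerivAt_normalize_comp line_deriv (by simpa using hb)).deriv
  rw [← deriv_zero]
  refine (tendsto_sq_smul_deriv_comp_inv_atTop smooth).congr' ?_
  filter_upwards [eventually_gt_atTop 0] with h hh
  congr 1
  refine EventuallyEq.deriv_eq ?_
  filter_upwards [eventually_gt_nhds hh] with s hs
  exact (normalize_add_smul_eq_normalize_add_inv_smul a b hs).symm

theorem smul_sub_inner_smul_eq_iff_exists {w V : F} (hw : ‖w‖ = 1) (hwV : ⟪w, V⟫ = 0) {v : ℝ}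
    (hv : v ≠ 0) (x : F) :
    v • (x - ⟪w, x⟫ • w) = V ↔ ∃ lam : ℝ, x = (1 / v) • (V - lam • w) := by
  constructor
  · rintro rfl
    refine ⟨-(v * ⟪w, x⟫), ?_⟩
    match_scalars <;> field_simp
    ring
  · rintro ⟨lam, rfl⟩
    have hinner : ⟪w, (1 / v) • (V - lam • w)⟫ = -(lam / v) := by
      rw [real_inner_smul_right, inner_sub_right, hwV, real_inner_smul_right,
        real_inner_self_eq_norm_sq, hw]
      ring
    rw [hinner]
    match_scalars <;> field_simp
    ring

end InnerProduct

section Hemisphere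

variable {E : Type*} [NormedAddCommGroup E] [InnerProductSpace ℝ E]

/-- The diffeomorphism `x ↦ (x, 1) / √(1 + ‖x‖²)` of an inner product space `E` onto the open upper
hemisphere of `E × ℝ`, the latter carrying its Euclidean structure as `WithLp 2`. -/
def hemisphereMap (x : E) : WithLp 2 (E × ℝ) :=
  normalize (toLp 2 (x, 1))

/-- Along the line `h ↦ x + h • y` the image under `hemisphereMap` tends to the equator point
`(w, 0)`, and its velocity, rescaled by `h²`, tends to `(V, v)`. -/
def TendsToEquator (w V : E) (v : ℝ) (x y : E) : Prop :=
  Tendsto (fun h : ℝ => hemisphereMap (x + h • y)) atTop (𝓝 (toLp 2 (w, 0))) ∧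
  Tendsto (fun h : ℝ => h ^ 2 • deriv (fun s : ℝ => hemisphereMap (x + s • y)) h) atTop
    (𝓝 (toLp 2 (V, v)))

theorem hemisphereMap_add_smul (x y : E) (h : ℝ) :
    hemisphereMap (x + h • y) = normalize (toLp 2 (x, (1 : ℝ)) + h • toLp 2 (y, (0 : ℝ))) := by
  rw [hemisphereMap, ← toLp_smul, ← toLp_add, Prod.smul_mk, Prod.mk_add_mk, smul_zero, add_zero]

theorem normalize_toLp_zero_right (y : E) :
    normalize (toLp 2 (y, (0 : ℝ))) = toLp 2 (normalize y, (0 : ℝ)) := by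
  simp only [NormedSpace.normalize, norm_toLp_fst, ← toLp_smul, Prod.smul_mk, smul_zero]

theorem tendsto_hemisphereMap_atTop (x : E) {y : E} (hy : y ≠ 0) :
    Tendsto (fun h : ℝ => hemisphereMap (x + h • y)) atTop (𝓝 (toLp 2 (normalize y, 0))) := by
  have hy' : toLp 2 (y, (0 : ℝ)) ≠ 0 := by simpa using hy
  simpa only [hemisphereMap_add_smul, normalize_toLp_zero_right] using
    tendsto_normalize_add_smul_atTop (toLp 2 (x, (1 : ℝ))) hy'

theorem tendsto_sq_smul_deriv_hemisphereMap_atTop (x : E) {y : E} (hy : y ≠ 0) :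
    Tendsto (fun h : ℝ => h ^ 2 • deriv (fun s : ℝ => hemisphereMap (x + s • y)) h) atTop
      (𝓝 (toLp 2 (-‖y‖⁻¹ • (x - ⟪normalize y, x⟫ • normalize y), -‖y‖⁻¹))) := by
  have hy' : toLp 2 (y, (0 : ℝ)) ≠ 0 := by simpa using hy
  have velocity_eq :
      -(‖toLp 2 (y, (0 : ℝ))‖⁻¹ • (toLp 2 (x, (1 : ℝ)) -
        ⟪normalize (toLp 2 (y, (0 : ℝ))), toLp 2 (x, (1 : ℝ))⟫ •
          normalize (toLp 2 (y, (0 : ℝ))))) =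
      toLp 2 (-‖y‖⁻¹ • (x - ⟪normalize y, x⟫ • normalize y), -‖y‖⁻¹) := by
    simp [normalize_toLp_zero_right, ← toLp_smul, ← toLp_sub, ← toLp_neg]
  simpa only [hemisphereMap_add_smul, velocity_eq] using
    tendsto_sq_smul_deriv_normalize_add_smul_atTop (toLp 2 (x, (1 : ℝ))) hy'

theorem tendsToEquator_iff_of_ne_zero {w V : E} {v : ℝ} (x : E) {y : E} (hy : y ≠ 0) :
    TendsToEquator w V v x y ↔ (normalize y = w ∧ -‖y‖⁻¹ = v) ∧ v • (x - ⟪w, x⟫ • w) = V := by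
  have tendsto_point := tendsto_hemisphereMap_atTop x hy
  have tendsto_velocity := tendsto_sq_smul_deriv_hemisphereMap_atTop x hy
  constructor
  · rintro ⟨hlim, hvel⟩
    have hpoint := tendsto_nhds_unique tendsto_point hlim
    have hvelocity := tendsto_nhds_unique tendsto_velocity hvel
    simp only [toLp.injEq, Prod.mk.injEq, and_true] at hpoint hvelocity
    obtain ⟨hV, hv⟩ := hvelocity
    exact ⟨⟨hpoint, hv⟩, by rwa [hpoint, hv] at hV⟩
  · rintro ⟨⟨rfl, rfl⟩, rfl⟩
    exact ⟨tendsto_point, tendsto_velocity⟩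

theorem tendsToEquator_iff_exists {w V : E} (hw : ‖w‖ = 1) (hwV : ⟪w, V⟫ = 0) {v : ℝ}
    (hv : v < 0) (x : E) {y : E} (hy : y ≠ 0) :
    TendsToEquator w V v x y ↔
      ∃ lam : ℝ, y = (-1 / v) • w ∧ x = (1 / v) • (V - lam • w) := by
  rw [tendsToEquator_iff_of_ne_zero x hy, normalize_eq_and_neg_inv_norm_eq_iff hw hv,
    smul_sub_inner_smul_eq_iff_exists hw hwV hv.ne, exists_and_left]

theorem stmt_19_general {w V : E} (hw : ‖w‖ = 1) (hwV : ⟪w, V⟫ = 0) {v : ℝ} (hv : v < 0) :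
    (∀ x y : E, y ≠ 0 →
      (TendsToEquator w V v x y ↔
        ∃ lam : ℝ, y = (-1 / v) • w ∧ x = (1 / v) • (V - lam • w))) ∧
    {q : E × E | q.2 ≠ 0 ∧ TendsToEquator w V v q.1 q.2} =
      {q : E × E | ∃ lam : ℝ, q = ((1 / v) • (V - lam • w), (-1 / v) • w)} := by
  refine ⟨fun x y hy => tendsToEquator_iff_exists hw hwV hv x hy, ?_⟩
  have hne : (-1 / v) • w ≠ 0 :=
    smul_ne_zero (div_ne_zero (by simp) hv.ne) (norm_ne_zero_iff.1 (by simp [hw]))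
  ext ⟨x, y⟩
  constructor
  · rintro ⟨hy, h⟩
    obtain ⟨lam, rfl, rfl⟩ := (tendsToEquator_iff_exists hw hwV hv x hy).1 h
    exact ⟨lam, rfl⟩
  · rintro ⟨lam, ⟨⟩⟩
    exact ⟨hne, (tendsToEquator_iff_exists hw hwV hv _ hne).2 ⟨lam, rfl, rfl⟩⟩

end Hemisphere

theorem sphereMap_eq_ofLp_hemisphereMap {n : ℕ} (x : EuclideanSpace ℝ (Fin n)) :
    sphereMap n x = ofLp (hemisphereMap x) := by
  rw [sphereMap, hemisphereMap, NormedSpace.normalize, prod_norm_eq_of_L2]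
  simp [add_comm]

theorem tendsCond_iff_tendsToEquator {n : ℕ} {w V : EuclideanSpace ℝ (Fin n)} {v : ℝ}
    {x y : EuclideanSpace ℝ (Fin n)} :
    TendsCond n w V v x y ↔ TendsToEquator w V v x y := by
  let e := prodContinuousLinearEquiv 2 ℝ (EuclideanSpace ℝ (Fin n)) ℝ
  have deriv_comp (γ : ℝ → WithLp 2 (EuclideanSpace ℝ (Fin n) × ℝ)) (h : ℝ) :
      deriv (fun s => ofLp (γ s)) h = ofLp (deriv γ h) :=
    congrArg (· 1) (e.comp_fderiv (f := γ) (x := h))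
  have tendsto_iff (f : ℝ → WithLp 2 (EuclideanSpace ℝ (Fin n) × ℝ))
      (q : EuclideanSpace ℝ (Fin n) × ℝ) :
      Tendsto (fun h => ofLp (f h)) atTop (𝓝 q) ↔ Tendsto f atTop (𝓝 (toLp 2 q)) :=
    (e.toHomeomorph.isInducing.tendsto_nhds_iff (f := f) (y := toLp 2 q)).symm
  simp only [TendsCond, TendsToEquator, sphereMap_eq_ofLp_hemisphereMap, deriv_comp, ← ofLp_smul,
    tendsto_iff]

/-- For `w` a unit vector, `V ⟂ w` and `v < 0`, a pair `(x, y)` with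
`y ≠ 0` satisfies the limiting conditions (i) at the equator point `(w, 0)` iff
`y = (−1/v)•w` and `x = (1/v)•(V − λ•w)` for some `λ ∈ ℝ`; consequently the set of all
such pairs is exactly this one-parameter family. -/
theorem stmt_19 (n : ℕ) (hn : 1 ≤ n)
    (w V : EuclideanSpace ℝ (Fin n)) (hw : ‖w‖ = 1) (hwV : ⟪w, V⟫ = 0)
    (v : ℝ) (hv : v < 0) :
    (∀ x y : EuclideanSpace ℝ (Fin n), y ≠ 0 →
      (TendsCond n w V v x y ↔
        ∃ lam : ℝ, y = (-1 / v) • w ∧ x = (1 / v) • (V - lam • w))) ∧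
    {q : EuclideanSpace ℝ (Fin n) × EuclideanSpace ℝ (Fin n) |
        q.2 ≠ 0 ∧ TendsCond n w V v q.1 q.2} =
      {q : EuclideanSpace ℝ (Fin n) × EuclideanSpace ℝ (Fin n) |
        ∃ lam : ℝ, q = ((1 / v) • (V - lam • w), (-1 / v) • w)} := by
  simpa only [tendsCond_iff_tendsToEquator] using stmt_19_general hw hwV hv

end
end
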